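/- Let (T_n) be a sequence of subsets of ℝ with accumulating renormalizations, and let (g_n) be a sequence in G = PSL(2,ℂ) with g_n → e and g_n ∉ AN for all n. Then the set AV ∩ limsup_n {u_t g_n u_s : t ∈ T_n, s ∈ ℝ} accumulates at e and at ∞. -/

import Mathlib

open scoped MatrixGroups
open Matrix Filter

noncomputable section

/-- `SL(2,ℂ)`. -/
abbrev SL2C := Matrix.SpecialLinearGroup (Fin 2) ℂ

instance : TopologicalSpace SL2C := instTopologicalSpaceSubtype

/-- `G = PSL(2,ℂ) = SL(2,ℂ)/{±I}`, with the quotient topology. -/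
abbrev PSL2C := Matrix.ProjectiveSpecialLinearGroup (Fin 2) ℂ

/-- The projection `π : SL(2,ℂ) → PSL(2,ℂ)`. -/
def pr : SL2C →* PSL2C := QuotientGroup.mk' _

/-- The upper triangular unipotent matrix `[[1, t],[0, 1]]` as an element of `SL(2,ℂ)`. -/
def uMat (t : ℂ) : SL2C := ⟨!![1, t; 0, 1], by simp [Matrix.det_fin_two_of]⟩

/-- `u_t = π [[1, t],[0, 1]]` for `t ∈ ℝ`. -/
def uu (t : ℝ) : PSL2C := pr (uMat t)

/-- `v_s = π [[1, is],[0, 1]]` for `s ∈ ℝ`. -/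
def vv (s : ℝ) : PSL2C := pr (uMat (s * Complex.I))

/-- The subgroup `U = {u_t : t ∈ ℝ}` as a subset of `PSL(2,ℂ)`. -/
def Uset : Set PSL2C := Set.range uu

/-- The subgroup `V = {v_s : s ∈ ℝ}` as a subset of `PSL(2,ℂ)`. -/
def Vset : Set PSL2C := Set.range vv

/-- The subgroup `N = {π [[1, z],[0,1]] : z ∈ ℂ}` as a subset of `PSL(2,ℂ)`. -/
def Nset : Set PSL2C := {x | ∃ z : ℂ, x = pr (uMat z)}

/-- `H = π (SL(2,ℝ))`, the image in `PSL(2,ℂ)` of the real matrices. -/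
def Hset : Set PSL2C :=
  {x | ∃ g : Matrix.SpecialLinearGroup (Fin 2) ℝ,
    x = pr (Matrix.SpecialLinearGroup.map (algebraMap ℝ ℂ) g)}

/-- The upper triangular matrix `[[a, z],[0, a⁻¹]]` as an element of `SL(2,ℂ)`,
for a nonzero real `a`. -/
def tri (a : ℝ) (ha : a ≠ 0) (z : ℂ) : SL2C :=
  ⟨!![(a : ℂ), z; 0, (a : ℂ)⁻¹], by
    have h : (a : ℂ) ≠ 0 := by exact_mod_cast ha
    simp [Matrix.det_fin_two_of, mul_inv_cancel₀ h]⟩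

/-- `AN = {π [[a, z],[0, a⁻¹]] : a > 0 real, z ∈ ℂ}`. -/
def ANset : Set PSL2C := {x | ∃ (a : ℝ) (ha : 0 < a) (z : ℂ), x = pr (tri a ha.ne' z)}

/-- `AV = {π [[a, ib],[0, a⁻¹]] : a > 0 real, b ∈ ℝ}`. -/
def AVset : Set PSL2C :=
  {x | ∃ (a : ℝ) (ha : 0 < a) (b : ℝ), x = pr (tri a ha.ne' (b * Complex.I))}

/-- `A = {π diag(a, a⁻¹) : a > 0 real}`. -/
def Aset : Set PSL2C := {x | ∃ (a : ℝ) (ha : 0 < a), x = pr (tri a ha.ne' 0)}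

variable (Γ : Subgroup PSL2C)

/-- The space `Γ\\G` of right cosets `Γg`, with the quotient topology. -/
abbrev XΓ := Quotient (QuotientGroup.rightRel Γ)

/-- The natural projection `G → Γ\\G`. -/
def mkX (g : PSL2C) : XΓ Γ := Quotient.mk'' g

/-- The right translation action of `G` on `Γ\\G`: `(Γg₀)·g = Γ(g₀g)`. -/
def act (x : XΓ Γ) (g : PSL2C) : XΓ Γ :=
  Quotient.map' (fun h => h * g)
    (fun a b hab => by
      rw [QuotientGroup.rightRel_apply] at hab ⊢
      simpa [_root_.mul_inv_rev, mul_assoc] using hab) x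

/-- The orbit `xS = {x·s : s ∈ S}` of a point `x ∈ Γ\\G` under a subset `S ⊆ G`. -/
def orb (x : XΓ Γ) (S : Set PSL2C) : Set (XΓ Γ) := (fun s => act Γ x s) '' S

/-- `Γ` is a lattice in `G`: there is a nonzero finite Borel measure on `Γ\\G`
invariant under the right translation action of `G`. -/
def IsLattice : Prop :=
  letI : MeasurableSpace (XΓ Γ) := borel _
  ∃ μ : MeasureTheory.Measure (XΓ Γ), μ ≠ 0 ∧ MeasureTheory.IsFiniteMeasure μ ∧
    ∀ g : PSL2C, MeasureTheory.Measure.map (fun x => act Γ x g) μ = μ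


/-- The topological `limsup` of a sequence of subsets of a topological space:
the set of points `x` such that every neighborhood of `x` meets `Q n` for
infinitely many `n`. -/
def seqLimsup {α : Type*} [TopologicalSpace α] (Q : ℕ → Set α) : Set α :=
  {x | ∀ O ∈ nhds x, {n | (O ∩ Q n).Nonempty}.Infinite}


/-- A sequence `T : ℕ → Set ℝ` has accumulating renormalizations if for every
sequence `λ_n → +∞` of positive reals, the set `T_∞ = limsup_n λ_n⁻¹ T_n`
contains a sequence of nonzero elements tending to `0`, as well as a sequence
whose absolute values tend to `+∞`. -/
def HasAccumulatingRenormalizations (T : ℕ → Set ℝ) : Prop :=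
  ∀ lam : ℕ → ℝ, (∀ n, 0 < lam n) → Tendsto lam atTop atTop →
    (∃ s : ℕ → ℝ,
      (∀ k, s k ∈ seqLimsup (fun n => (fun t => (lam n)⁻¹ * t) '' T n) ∧ s k ≠ 0) ∧
      Tendsto s atTop (nhds 0)) ∧
    (∃ s : ℕ → ℝ,
      (∀ k, s k ∈ seqLimsup (fun n => (fun t => (lam n)⁻¹ * t) '' T n)) ∧
      Tendsto (fun k => |s k|) atTop atTop)

/-- A single subset `T ⊆ ℝ` has accumulating renormalizations if the constant
sequence `T_n = T` does. -/
def HasAccumulatingRenormalizationsSet (T : Set ℝ) : Prop :=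
  HasAccumulatingRenormalizations (fun _ => T)


/-- A subset `S ⊆ PSL(2,ℂ)` accumulates at `e` and at `∞`: `S ∖ {e}` contains a
sequence converging to `e`, and `S` contains a sequence eventually leaving
every compact subset. -/
def AccumulatesAtIdAndInfty (S : Set PSL2C) : Prop :=
  (∃ s : ℕ → PSL2C, (∀ k, s k ∈ S ∧ s k ≠ 1) ∧ Tendsto s atTop (nhds 1)) ∧
  (∃ s : ℕ → PSL2C, (∀ k, s k ∈ S) ∧
    ∀ K : Set PSL2C, IsCompact K → ∀ᶠ k in atTop, s k ∉ K)

open Topology ComplexConjugate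

/-!
Lift `g n` to matrices `h = [[a, b], [c, d]]` tending to the identity. In `u_t h u_s` choose `s` so
that the upper right entry is purely imaginary; it is then `i` times the quotient of a quadratic
polynomial in `t` by `Re (a + t c)`. If `t` grows at the rate at which `t P`, `t² Q` and `t Re c`
stay bounded but do not all tend to `0`, where `P` and `Q` are the linear and quadratic coefficients
of the numerator, then the products converge along a subsequence to
`[[1 + r, i (p + q) / (1 + r)], [0, (1 + r)⁻¹]]` with `p`, `q`, `r` the limits of these three
quantities. The limit is nontrivial, small or large along with `(p, q, r)`, unless there is
cancellation in `p + q` or `1 + r`. Only the times comparable to the two numbers `|P / Q|` and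
`1 / |Re c|` are bad, so a sufficiently wide window of scales contains a scale that avoids them, and
accumulating renormalizations provide elements of `T n` comparable to any given scale.
-/

/-! ### Limits of sequences of sets -/

lemma mem_seqLimsup_of_tendsto {α : Type*} [TopologicalSpace α] {Q : ℕ → Set α} {x : α}
    {l : Filter ℕ} [l.NeBot] (hl : l ≤ atTop) {f : ℕ → α} (hf : Tendsto f l (𝓝 x))
    (hfQ : ∀ᶠ n in l, f n ∈ Q n) : x ∈ seqLimsup Q := by
  intro O hO
  rw [← Nat.frequently_atTop_iff_infinite]
  exact (((hf.eventually hO).and hfQ).frequently.filter_mono hl).mono fun n hn => ⟨f n, hn⟩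

lemma frequently_of_mem_seqLimsup {α : Type*} [TopologicalSpace α] {Q : ℕ → Set α} {x : α}
    (hx : x ∈ seqLimsup Q) {O : Set α} (hO : O ∈ 𝓝 x) : ∃ᶠ n in atTop, ∃ y ∈ Q n, y ∈ O :=
  (Nat.frequently_atTop_iff_infinite.2 (hx O hO)).mono fun _ ⟨y, hyO, hyQ⟩ => ⟨y, hyQ, hyO⟩

lemma exists_tendsto_atTop_eventually_diagonal {E : ℕ → ℕ → Prop}
    (hE : ∀ k, ∀ᶠ n in atTop, E k n) :
    ∃ κ : ℕ → ℕ, Tendsto κ atTop atTop ∧ ∀ᶠ n in atTop, E (κ n) n := by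
  classical
  choose N hN using fun k => eventually_atTop.1 (hE k)
  refine ⟨fun n => Nat.findGreatest (N · ≤ n) n, tendsto_atTop.2 fun K => ?_, ?_⟩
  · filter_upwards [eventually_ge_atTop K, eventually_ge_atTop (N K)] with n hK hNK
    exact Nat.le_findGreatest hK hNK
  · filter_upwards [eventually_ge_atTop (N 0)] with n hn
    exact hN _ _ (Nat.findGreatest_spec (P := (N · ≤ n)) n.zero_le hn)

lemma eventually_notMem_of_isCompact {X ι : Type*} [TopologicalSpace X] {F : X → ℝ}
    (hF : Continuous F) {l : Filter ι} {x : ι → X} (hx : Tendsto (fun i => F (x i)) l atTop)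
    {K : Set X} (hK : IsCompact K) : ∀ᶠ i in l, x i ∉ K := by
  obtain ⟨B, hB⟩ := (hK.image hF).bddAbove
  filter_upwards [hx.eventually_gt_atTop B] with i hi hiK
  exact hi.not_ge (hB ⟨x i, hiK, rfl⟩)

lemma exists_ultrafilter_le_of_frequently {ι : Type*} {l : Filter ι} {P : ι → Prop}
    (hP : ∃ᶠ i in l, P i) : ∃ U : Ultrafilter ι, ↑U ≤ l ∧ ∀ᶠ i in U, P i := by
  have : NeBot (l ⊓ 𝓟 {i | P i}) := frequently_mem_iff_neBot.1 hP
  obtain ⟨U, hU⟩ := Ultrafilter.exists_le (l ⊓ 𝓟 {i | P i})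
  exact ⟨U, hU.trans inf_le_left, le_principal_iff.1 (hU.trans inf_le_right)⟩

lemma exists_tendsto_ultrafilter_of_abs_le {ι : Type*} (U : Ultrafilter ι) {f : ι → ℝ} {M : ℝ}
    (hf : ∀ᶠ i in U, |f i| ≤ M) : ∃ x, Tendsto f U (𝓝 x) := by
  obtain ⟨x, -, hx⟩ := (isCompact_Icc (a := -M) (b := M)).ultrafilter_le_nhds' (U.map f)
    (hf.mono fun i => abs_le.1)
  exact ⟨x, hx⟩

/-! ### Sums without cancellation -/

/-- The two terms of the sum `x + y` do not cancel: each is at most twice the sum in absolute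
value. The constant `2` plays no special role; the non-strict form survives limits. -/
def NonCancelling (x y : ℝ) : Prop := |x| ≤ 2 * |x + y| ∧ |y| ≤ 2 * |x + y|

namespace NonCancelling

variable {x y : ℝ}

lemma of_two_mul_abs_lt (h : 2 * |x| < |y| ∨ 2 * |y| < |x|) : NonCancelling x y := by
  unfold NonCancelling
  grind

lemma mul_left (h : NonCancelling x y) (c : ℝ) : NonCancelling (c * x) (c * y) := by
  simp only [NonCancelling, ← mul_add, abs_mul, mul_left_comm 2 |c|]
  exact ⟨mul_le_mul_of_nonneg_left h.1 (abs_nonneg c), mul_le_mul_of_nonneg_left h.2 (abs_nonneg c)⟩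

lemma of_tendsto {ι : Type*} {l : Filter ι} [l.NeBot] {f g : ι → ℝ} (hf : Tendsto f l (𝓝 x))
    (hg : Tendsto g l (𝓝 y)) (h : ∀ᶠ i in l, NonCancelling (f i) (g i)) : NonCancelling x y :=
  have hsum := (hf.add hg).abs.const_mul 2
  ⟨le_of_tendsto_of_tendsto hf.abs hsum (h.mono fun _ => And.left),
    le_of_tendsto_of_tendsto hg.abs hsum (h.mono fun _ => And.right)⟩

lemma eq_zero_of_add_eq_zero (h : NonCancelling x y) (hxy : x + y = 0) : x = 0 ∧ y = 0 := by
  simpa [NonCancelling, hxy] using h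

lemma of_notMem_Ico {p q t w s C : ℝ} (hpq : |p / q| ∉ Set.Ico (w / s) (w * s)) (hC : 0 < C)
    (hs : 2 * C < s) (hw : 0 < w) (hwt : w ≤ C * |t|) (htw : |t| ≤ C * w) :
    NonCancelling p (t * q) := by
  rcases eq_or_ne q 0 with rfl | hq
  · simpa [NonCancelling] using le_mul_of_one_le_left (abs_nonneg p) one_le_two
  have hq : 0 < |q| := abs_pos.2 hq
  apply of_two_mul_abs_lt
  rw [Set.mem_Ico, not_and_or, not_le, not_lt, abs_div, div_lt_div_iff₀ hq (by linarith),
    le_div_iff₀ hq] at hpq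
  rw [abs_mul]
  refine hpq.imp (fun h => ?_) fun h => ?_
  · have : |p| * (2 * C) < C * |t| * |q| := by
      calc |p| * (2 * C) ≤ |p| * s := by gcongr
        _ < w * |q| := h
        _ ≤ C * |t| * |q| := by gcongr
    nlinarith
  · calc 2 * (|t| * |q|) ≤ w * (2 * C) * |q| := by nlinarith
      _ < w * s * |q| := by gcongr
      _ ≤ |p| := h

end NonCancelling

/-! ### Choosing times at a prescribed scale -/

lemma exists_scale_avoiding {ι : Type*} [Fintype ι] (y : ι → ℝ) {a s : ℝ} (ha : 0 ≤ a)
    (hs : 1 ≤ s) : ∃ w, a * s ≤ w ∧ w * s ≤ a * s ^ (2 * (Fintype.card ι + 1)) ∧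
      ∀ i, y i ∉ Set.Ico (w / s) (w * s) := by
  have hmono : Monotone fun j : ℕ => a * s ^ (2 * j) := fun j k hjk => by
    dsimp only
    gcongr
  obtain ⟨j, hj⟩ : ∃ j : Fin (Fintype.card ι + 1),
      ∀ i, y i ∉ Set.Ico (a * s ^ (2 * (j : ℕ))) (a * s ^ (2 * ((j : ℕ) + 1))) := by
    by_contra! hcon
    choose i hi using hcon
    obtain ⟨j, k, hjk, hijk⟩ := Fintype.exists_ne_map_eq_of_card_lt i (by simp)
    have hdisj := hmono.pairwise_disjoint_on_Ico_succ (Fin.val_injective.ne hjk)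
    exact Set.disjoint_left.1 hdisj (hi j) (hijk ▸ hi k)
  have hs0 : 0 < s := by linarith
  refine ⟨a * s ^ (2 * (j : ℕ)) * s, ?_, ?_, fun i => ?_⟩
  · gcongr
    exact le_mul_of_one_le_right ha (one_le_pow₀ hs)
  · calc a * s ^ (2 * (j : ℕ)) * s * s = a * s ^ (2 * ((j : ℕ) + 1)) := by ring
      _ ≤ _ := hmono (by omega)
  · rw [mul_div_cancel_right₀ _ hs0.ne',
      show a * s ^ (2 * (j : ℕ)) * s * s = a * s ^ (2 * ((j : ℕ) + 1)) by ring]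
    exact hj i

namespace HasAccumulatingRenormalizations

variable {T : ℕ → Set ℝ} (hT : HasAccumulatingRenormalizations T)
include hT

lemma frequently_comparable {w : ℕ → ℝ} (hw : Tendsto w atTop atTop) :
    ∃ C > 0, ∃ᶠ n in atTop, ∃ t ∈ T n, w n ≤ C * |t| ∧ |t| ≤ C * w n := by
  obtain ⟨⟨σ, hσ, -⟩, -⟩ := hT (fun n => max (w n) 1) (fun n => by positivity)
    (tendsto_atTop_mono (fun n => le_max_left _ _) hw)
  obtain ⟨hmem, hne⟩ := hσ 0
  set τ := |σ 0|
  have hτ : 0 < τ := abs_pos.2 hne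
  have hO : {x : ℝ | |x| ∈ Set.Ioo (τ / 2) (2 * τ)} ∈ 𝓝 (σ 0) :=
    continuous_abs.continuousAt.preimage_mem_nhds
      (Ioo_mem_nhds (half_lt_self hτ) (by simpa [τ, two_mul] using hne))
  refine ⟨2 * τ + 2 / τ, by positivity, ?_⟩
  refine ((frequently_of_mem_seqLimsup hmem hO).and_eventually
    (hw.eventually_ge_atTop 1)).mono ?_
  rintro n ⟨⟨_, ⟨t, ht, rfl⟩, htO⟩, hwn⟩
  have hw0 : 0 < w n := by linarith
  simp only [max_eq_left hwn, Set.mem_ofPred_eq, abs_mul, abs_inv, abs_of_pos hw0, Set.mem_Ioo,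
    lt_inv_mul_iff₀ hw0, inv_mul_lt_iff₀ hw0] at htO
  refine ⟨t, ht, ?_, ?_⟩
  · calc w n = 2 / τ * (w n * (τ / 2)) := by field_simp
      _ ≤ 2 / τ * |t| := by gcongr; exact htO.1.le
      _ ≤ (2 * τ + 2 / τ) * |t| := by gcongr; linarith
  · calc |t| ≤ 2 * τ * w n := by linarith
      _ ≤ (2 * τ + 2 / τ) * w n := by gcongr; linarith [div_pos two_pos hτ]

-- A scale away from all the ratios `|p i n / q i n|` exists because there are finitely many of them
-- and the window `[lo n, hi n]` becomes arbitrarily wide.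
lemma frequently_nonCancelling {ι : Type*} [Finite ι] (p q : ι → ℕ → ℝ) {lo hi : ℕ → ℝ}
    (hlo : Tendsto lo atTop atTop) (hratio : Tendsto (fun n => hi n / lo n) atTop atTop) :
    ∃ᶠ n in atTop, ∃ t ∈ T n, |t| ∈ Set.Icc (lo n) (hi n) ∧
      ∀ i, NonCancelling (p i n) (t * q i n) := by
  cases nonempty_fintype ι
  set m := 2 * (Fintype.card ι + 1)
  set s : ℕ → ℝ := fun n => (hi n / lo n) ^ (m⁻¹ : ℝ)
  have hs : Tendsto s atTop atTop := (tendsto_rpow_atTop (by positivity)).comp hratio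
  have hspow : ∀ᶠ n in atTop, lo n * s n ^ m = hi n := by
    filter_upwards [hlo.eventually_gt_atTop 0, hratio.eventually_ge_atTop 0] with n hlon hn
    rw [Real.rpow_inv_natCast_pow hn (by positivity), mul_div_cancel₀ _ hlon.ne']
  have hscale : ∀ᶠ n in atTop, ∃ w, lo n * s n ≤ w ∧ w * s n ≤ hi n ∧
      ∀ i, |p i n / q i n| ∉ Set.Ico (w / s n) (w * s n) := by
    filter_upwards [hspow, hlo.eventually_ge_atTop 0, hs.eventually_ge_atTop 1] with n hn hlon hsn
    exact hn ▸ exists_scale_avoiding _ hlon hsn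
  obtain ⟨w, hw⟩ := hscale.choice
  have hw_atTop : Tendsto w atTop atTop :=
    tendsto_atTop_mono' _ (hw.mono fun n hn => hn.1) (hlo.atTop_mul_atTop₀ hs)
  obtain ⟨C, hC, hfreq⟩ := hT.frequently_comparable hw_atTop
  refine (hfreq.and_eventually (hw.and ((hs.eventually_gt_atTop (2 * C)).and
    ((hlo.eventually_ge_atTop 0).and (hw_atTop.eventually_gt_atTop 0))))).mono ?_
  rintro n ⟨⟨t, ht, hwt, htw⟩, ⟨hlow, hwhi, havoid⟩, hsC, hlo0, hw0⟩
  refine ⟨t, ht, ⟨?_, ?_⟩, fun i => .of_notMem_Ico (havoid i) hC hsC hw0 hwt htw⟩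
  · refine le_of_mul_le_mul_left ?_ hC
    calc C * lo n ≤ lo n * s n := by nlinarith
      _ ≤ w n := hlow
      _ ≤ C * |t| := hwt
  · calc |t| ≤ C * w n := htw
      _ ≤ w n * s n := by nlinarith
      _ ≤ hi n := hwhi

lemma exists_frequently_nonCancelling {ι : Type*} [Finite ι] (p q : ι → ℕ → ℝ) {lam : ℕ → ℝ}
    (hlam : Tendsto lam atTop atTop) {x y : ℕ → ℝ} (hx : ∀ k, 0 < x k)
    (hxy : Tendsto (fun k => y k / x k) atTop atTop) :
    ∃ k, ∃ᶠ n in atTop, ∃ t ∈ T n, |t| ∈ Set.Icc (x k * lam n) (y k * lam n) ∧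
      ∀ i, NonCancelling (p i n) (t * q i n) := by
  by_contra! hcon
  obtain ⟨κ, hκ, hκE⟩ := exists_tendsto_atTop_eventually_diagonal fun k =>
    ((hlam.const_mul_atTop (hx k)).eventually_ge_atTop (k : ℝ)).and (hcon k)
  have hlo : Tendsto (fun n => x (κ n) * lam n) atTop atTop :=
    tendsto_atTop_mono' _ (hκE.mono fun n hn => hn.1) (tendsto_natCast_atTop_atTop.comp hκ)
  have hratio : Tendsto (fun n => y (κ n) * lam n / (x (κ n) * lam n)) atTop atTop := by
    refine (hxy.comp hκ).congr' ?_
    filter_upwards [hlam.eventually_ne_atTop 0] with n hn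
    exact (mul_div_mul_right _ _ hn).symm
  obtain ⟨n, ⟨t, ht, htI, htp⟩, -, hn⟩ :=
    ((hT.frequently_nonCancelling p q hlo hratio).and_eventually hκE).exists
  obtain ⟨i, hi⟩ := hn t ht htI
  exact hi (htp i)

end HasAccumulatingRenormalizations

/-! ### The quotient map from `SL(2, ℂ)` to `PSL(2, ℂ)` -/

instance : ContinuousMul SL2C := Matrix.SpecialLinearGroup.topologicalGroup.toContinuousMul

instance : FirstCountableTopology SL2C :=
  inferInstanceAs (FirstCountableTopology {A : Fin 2 → Fin 2 → ℂ // Matrix.det A = 1})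

lemma continuous_pr : Continuous pr := continuous_quotient_mk'

lemma isOpenMap_pr : IsOpenMap pr := QuotientGroup.isOpenMap_coe

lemma exists_tendsto_lift {g : ℕ → PSL2C} {x : SL2C} (hg : Tendsto g atTop (𝓝 (pr x))) :
    ∃ h : ℕ → SL2C, (∀ᶠ n in atTop, pr (h n) = g n) ∧ Tendsto h atTop (𝓝 x) :=
  LowerHemicontinuousAt.exists_seq_tendsto
    (isOpenMap_iff_lowerHemicontinuous.1 isOpenMap_pr _) hg rfl

lemma mem_center_SL_two_iff {R : Type*} [CommRing R] [NoZeroDivisors R] {z : SL(2, R)} :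
    z ∈ Subgroup.center SL(2, R) ↔ z = 1 ∨ z = -1 := by
  rw [Matrix.SpecialLinearGroup.mem_center_iff, Fintype.card_fin]
  constructor
  · rintro ⟨r, hr, hz⟩
    obtain rfl | rfl := sq_eq_one_iff.1 hr
    · exact Or.inl (Subtype.ext (by simp [← hz]))
    · exact Or.inr (Subtype.ext (by rw [← hz, map_neg, map_one]; rfl))
  · rintro (rfl | rfl)
    · exact ⟨1, by simp⟩
    · exact ⟨-1, by simp, by rw [map_neg, map_one]; rfl⟩

lemma pr_eq_pr_iff {g h : SL2C} : pr g = pr h ↔ h = g ∨ h = -g := by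
  rw [show pr g = pr h ↔ g⁻¹ * h ∈ Subgroup.center SL2C from QuotientGroup.eq,
    mem_center_SL_two_iff, inv_mul_eq_iff_eq_mul, inv_mul_eq_iff_eq_mul, mul_one, mul_neg, mul_one]

lemma tendsto_entry {ι : Type*} {l : Filter ι} {f : ι → SL2C} {x : SL2C}
    (hf : Tendsto f l (𝓝 x)) (i j : Fin 2) : Tendsto (fun n => f n i j) l (𝓝 (x i j)) :=
  ((show Continuous fun h : SL2C => h i j by fun_prop).tendsto x).comp hf

lemma tendsto_SL2C_of_tendsto_entries {ι : Type*} {l : Filter ι} {f : ι → SL2C} {x : SL2C}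
    (hx : x 0 0 ≠ 0) (h00 : Tendsto (fun n => f n 0 0) l (𝓝 (x 0 0)))
    (h01 : Tendsto (fun n => f n 0 1) l (𝓝 (x 0 1)))
    (h10 : Tendsto (fun n => f n 1 0) l (𝓝 (x 1 0))) : Tendsto f l (𝓝 x) := by
  have eq_div {g : SL2C} (hg : g 0 0 ≠ 0) : g 1 1 = (1 + g 0 1 * g 1 0) / g 0 0 := by
    rw [eq_div_iff hg]
    linear_combination (g.1.det_fin_two.symm.trans g.2)
  have h11 : Tendsto (fun n => f n 1 1) l (𝓝 (x 1 1)) := by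
    rw [eq_div hx]
    refine (((h01.mul h10).const_add 1).div h00 hx).congr' ?_
    filter_upwards [h00.eventually_ne hx] with n hn using (eq_div hn).symm
  refine tendsto_subtype_rng.2 (tendsto_pi_nhds.2 fun i => tendsto_pi_nhds.2 fun j => ?_)
  fin_cases i <;> fin_cases j <;> assumption

lemma pr_tri_mem_AVset {a : ℝ} (ha : a ≠ 0) (b : ℝ) : pr (tri a ha (b * Complex.I)) ∈ AVset := by
  rcases ha.lt_or_gt with h | h
  · refine ⟨-a, neg_pos.2 h, -b, pr_eq_pr_iff.2 (Or.inr ?_)⟩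
    ext i j
    rw [Matrix.SpecialLinearGroup.coe_neg]
    fin_cases i <;> fin_cases j <;> simp [tri, inv_neg]
  · exact ⟨a, h, b, rfl⟩

/-- The sum of the absolute values of the entries in the first row, which is well defined on
`PSL(2, ℂ)`; it detects escape to infinity. -/
def topRowNorm : PSL2C → ℝ :=
  Quotient.lift (fun h : SL2C => ‖h 0 0‖ + ‖h 0 1‖) fun g h hgh => by
    obtain rfl | rfl := pr_eq_pr_iff.1 (Quotient.sound hgh) <;> simp

lemma topRowNorm_pr (h : SL2C) : topRowNorm (pr h) = ‖h 0 0‖ + ‖h 0 1‖ := rfl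

lemma continuous_topRowNorm : Continuous topRowNorm :=
  Continuous.quotient_lift (by fun_prop) _

/-! ### The orbit of a matrix under left and right multiplication by `U` -/

/-- The coefficient of `t` in `Im ((b + t d) * conj (a + t c))` for `h = [[a, b], [c, d]]`. -/
def linCoeff (h : SL2C) : ℝ := (h 1 1 * conj (h 0 0) + h 0 1 * conj (h 1 0)).im

/-- The coefficient of `t ^ 2` in `Im ((b + t d) * conj (a + t c))` for `h = [[a, b], [c, d]]`. -/
def quadCoeff (h : SL2C) : ℝ := (h 1 1 * conj (h 1 0)).im

lemma continuous_linCoeff : Continuous linCoeff := by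
  unfold linCoeff
  fun_prop

lemma continuous_quadCoeff : Continuous quadCoeff := by
  unfold quadCoeff
  fun_prop

lemma coe_uMat_mul_mul_uMat (h : SL2C) (t s : ℂ) :
    (uMat t * h * uMat s : SL2C) = !![h 0 0 + t * h 1 0,
      h 0 1 + t * h 1 1 + s * (h 0 0 + t * h 1 0); h 1 0, h 1 1 + s * h 1 0] := by
  ext i j
  simp only [Matrix.SpecialLinearGroup.coe_mul, Matrix.mul_apply, Fin.sum_univ_two]
  fin_cases i <;> fin_cases j <;> simp [uMat, mul_comm, add_comm]

lemma add_neg_re_div_re_mul {α : ℂ} (hα : α.re ≠ 0) (β : ℂ) :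
    β + ((-β.re / α.re : ℝ) : ℂ) * α =
      (((β * conj α).im / α.re : ℝ) : ℂ) * Complex.I := by
  apply Complex.ext
  · simp only [Complex.add_re, Complex.re_ofReal_mul, Complex.mul_I_re, Complex.ofReal_im]
    field_simp
    ring
  · rw [Complex.add_im, Complex.im_ofReal_mul, Complex.mul_I_im, Complex.ofReal_re, Complex.mul_im,
      Complex.conj_re, Complex.conj_im]
    field_simp
    ring

lemma im_row_mul_conj (h : SL2C) (t : ℝ) :
    ((h 0 1 + t * h 1 1) * conj (h 0 0 + t * h 1 0)).im =
      (h 0 1 * conj (h 0 0)).im + t * linCoeff h + t ^ 2 * quadCoeff h := by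
  simp only [linCoeff, quadCoeff, Complex.mul_im, Complex.mul_re, Complex.add_re, Complex.add_im,
    Complex.conj_re, Complex.conj_im, Complex.ofReal_re, Complex.ofReal_im, map_add, map_mul,
    Complex.conj_ofReal]
  ring

section Limit

variable {ι : Type*} {l : Filter ι} {h : ι → SL2C} {t : ι → ℝ} {p q r : ℝ}

lemma tendsto_ofReal_mul_lowerLeft (hh : Tendsto h l (𝓝 1))
    (ht : Tendsto t l (Bornology.cobounded ℝ))
    (hq : Tendsto (fun i => t i ^ 2 * quadCoeff (h i)) l (𝓝 q))
    (hr : Tendsto (fun i => t i * (h i 1 0).re) l (𝓝 r)) :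
    Tendsto (fun i => (t i : ℂ) * h i 1 0) l (𝓝 r) := by
  have hd : Tendsto (fun i => h i 1 1) l (𝓝 1) := tendsto_entry hh 1 1
  have hdre : Tendsto (fun i => (h i 1 1).re) l (𝓝 1) := (Complex.continuous_re.tendsto 1).comp hd
  have hdim : Tendsto (fun i => (h i 1 1).im) l (𝓝 0) := (Complex.continuous_im.tendsto 1).comp hd
  have hquad : Tendsto (fun i => t i * quadCoeff (h i)) l (𝓝 0) := by
    have := (tendsto_inv₀_cobounded.comp ht).mul hq
    rw [zero_mul] at this
    refine this.congr' ?_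
    filter_upwards [ht.eventually_ne_cobounded 0] with i hi
    simp only [Function.comp_apply]
    field_simp
  have him : Tendsto (fun i => t i * (h i 1 0).im) l (𝓝 0) := by
    have := ((hdim.mul hr).sub hquad).div hdre one_ne_zero
    simp only [zero_mul, sub_zero, zero_div] at this
    refine this.congr' ?_
    filter_upwards [hdre.eventually_ne one_ne_zero] with i hi
    simp only [Pi.div_apply, quadCoeff, Complex.mul_im, Complex.conj_re, Complex.conj_im]
    field_simp
    ring
  have := ((Complex.continuous_ofReal.tendsto r).comp hr).add
    (((Complex.continuous_ofReal.tendsto 0).comp him).mul_const Complex.I)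
  simp only [Complex.ofReal_zero, zero_mul, add_zero] at this
  refine this.congr fun i => ?_
  apply Complex.ext <;> simp

-- `s i` makes the upper right entry purely imaginary, which forces the limit into `AV`.
lemma exists_tendsto_uMat_mul_mul_uMat (hh : Tendsto h l (𝓝 1))
    (ht : Tendsto t l (Bornology.cobounded ℝ))
    (hp : Tendsto (fun i => t i * linCoeff (h i)) l (𝓝 p))
    (hq : Tendsto (fun i => t i ^ 2 * quadCoeff (h i)) l (𝓝 q))
    (hr : Tendsto (fun i => t i * (h i 1 0).re) l (𝓝 r)) (h1r : 1 + r ≠ 0) :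
    ∃ s : ι → ℝ, Tendsto (fun i => uMat (t i) * h i * uMat (s i)) l
      (𝓝 (tri (1 + r) h1r (((p + q) / (1 + r) : ℝ) * Complex.I))) := by
  have hα : Tendsto (fun i => h i 0 0 + t i * h i 1 0) l (𝓝 ((1 + r : ℝ) : ℂ)) := by
    simpa using (tendsto_entry hh 0 0).add (tendsto_ofReal_mul_lowerLeft hh ht hq hr)
  have hαre : Tendsto (fun i => (h i 0 0 + t i * h i 1 0).re) l (𝓝 (1 + r)) :=
    (Complex.continuous_re.tendsto _).comp hα
  have hab : Tendsto (fun i => (h i 0 1 * conj (h i 0 0)).im) l (𝓝 0) := by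
    have hcont : Continuous fun h : SL2C => (h 0 1 * conj (h 0 0)).im := by fun_prop
    exact (hcont.tendsto' 1 0 (by simp)).comp hh
  have hβ : Tendsto (fun i => ((h i 0 1 + t i * h i 1 1) *
      conj (h i 0 0 + t i * h i 1 0)).im / (h i 0 0 + t i * h i 1 0).re) l
      (𝓝 ((p + q) / (1 + r))) := by
    simp only [im_row_mul_conj]
    exact (zero_add p ▸ (hab.add hp).add hq).div hαre h1r
  refine ⟨fun i => -(h i 0 1 + t i * h i 1 1).re / (h i 0 0 + t i * h i 1 0).re,
    tendsto_SL2C_of_tendsto_entries (Complex.ofReal_ne_zero.2 h1r) ?_ ?_ ?_⟩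
  · simp only [coe_uMat_mul_mul_uMat]
    exact hα
  · refine (((Complex.continuous_ofReal.tendsto _).comp hβ).mul_const Complex.I).congr' ?_
    filter_upwards [hαre.eventually_ne h1r] with i hi
    rw [coe_uMat_mul_mul_uMat]
    exact (add_neg_re_div_re_mul hi _).symm
  · simp only [coe_uMat_mul_mul_uMat]
    exact tendsto_entry hh 1 0

end Limit

/-! ### Distance from `AN` and the blowup limits -/

/-- A size on triples `(p, q, r)` which is homogeneous under `(p, q, r) ↦ (t p, t² q, t r)`. -/
def weightedSize (p q r : ℝ) : ℝ := |p| + √|q| + |r|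

lemma weightedSize_dilation (t p q r : ℝ) :
    weightedSize (t * p) (t ^ 2 * q) (t * r) = |t| * weightedSize p q r := by
  simp only [weightedSize, abs_mul, abs_pow, Real.sqrt_mul (sq_nonneg |t|),
    Real.sqrt_sq (abs_nonneg t)]
  ring

lemma weightedSize_eq_zero_iff {p q r : ℝ} : weightedSize p q r = 0 ↔ p = 0 ∧ q = 0 ∧ r = 0 := by
  have hp := abs_nonneg p
  have hq := Real.sqrt_nonneg |q|
  have hr := abs_nonneg r
  rw [weightedSize, add_eq_zero_iff_of_nonneg (by positivity) hr,
    add_eq_zero_iff_of_nonneg hp hq, Real.sqrt_eq_zero (abs_nonneg q), abs_eq_zero, abs_eq_zero,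
    abs_eq_zero, and_assoc]

lemma continuous_weightedSize : Continuous fun x : ℝ × ℝ × ℝ => weightedSize x.1 x.2.1 x.2.2 := by
  unfold weightedSize
  fun_prop

lemma tendsto_weightedSize {ι : Type*} {l : Filter ι} {f g k : ι → ℝ} {p q r : ℝ}
    (hf : Tendsto f l (𝓝 p)) (hg : Tendsto g l (𝓝 q)) (hk : Tendsto k l (𝓝 r)) :
    Tendsto (fun i => weightedSize (f i) (g i) (k i)) l (𝓝 (weightedSize p q r)) :=
  (continuous_weightedSize.tendsto (p, q, r)).comp (hf.prodMk_nhds (hg.prodMk_nhds hk))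

lemma abs_le_weightedSize (p q r : ℝ) :
    |p| ≤ weightedSize p q r ∧ |q| ≤ weightedSize p q r ^ 2 ∧ |r| ≤ weightedSize p q r := by
  have hp := abs_nonneg p
  have hq := Real.sqrt_nonneg |q|
  have hr := abs_nonneg r
  refine ⟨by unfold weightedSize; linarith, ?_, by unfold weightedSize; linarith⟩
  rw [← Real.sqrt_le_left (by unfold weightedSize; positivity), weightedSize]
  linarith

lemma tendsto_zero_of_tendsto_weightedSize {ι : Type*} {l : Filter ι} {f g k : ι → ℝ}
    (h : Tendsto (fun i => weightedSize (f i) (g i) (k i)) l (𝓝 0)) :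
    Tendsto f l (𝓝 0) ∧ Tendsto g l (𝓝 0) ∧ Tendsto k l (𝓝 0) := by
  refine ⟨squeeze_zero_norm (fun i => (abs_le_weightedSize _ _ _).1) h,
    squeeze_zero_norm (fun i => (abs_le_weightedSize (f i) (g i) (k i)).2.1) ?_,
    squeeze_zero_norm (fun i => (abs_le_weightedSize _ _ _).2.2) h⟩
  simpa using h.pow 2

/-- A measure of how far `h` is from `AN`; it vanishes exactly on `AN` near the identity, and its
inverse is the time scale at which the orbit of `h` becomes visible. -/
def offANSize (h : SL2C) : ℝ := weightedSize (linCoeff h) (quadCoeff h) (h 1 0).re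

lemma continuous_offANSize : Continuous offANSize :=
  continuous_weightedSize.comp
    (continuous_linCoeff.prodMk (continuous_quadCoeff.prodMk (by fun_prop)))

lemma offANSize_one : offANSize 1 = 0 := by
  simp [offANSize, weightedSize, linCoeff, quadCoeff]

lemma offANSize_nonneg (h : SL2C) : 0 ≤ offANSize h := by
  unfold offANSize weightedSize
  positivity

lemma pr_mem_ANset_of_offANSize_eq_zero {h : SL2C} (ha : 0 < (h 0 0).re) (hd : 0 < (h 1 1).re)
    (hh : offANSize h = 0) : pr h ∈ ANset := by
  obtain ⟨hlin, hquad, hcre⟩ := weightedSize_eq_zero_iff.1 hh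
  have hc : h 1 0 = 0 := by
    refine Complex.ext hcre ?_
    simpa [quadCoeff, hcre, hd.ne'] using hquad
  have hdet : h 0 0 * h 1 1 = 1 := by
    simpa [hc] using h.1.det_fin_two.symm.trans h.2
  have him : (h 0 0).im = 0 := by
    have hdet_im : (h 0 0).re * (h 1 1).im + (h 0 0).im * (h 1 1).re = 0 := by
      simpa using congrArg Complex.im hdet
    have hlin_im : -((h 1 1).re * (h 0 0).im) + (h 1 1).im * (h 0 0).re = 0 := by
      simpa [linCoeff, hc] using hlin
    nlinarith
  have hreal : ((h 0 0).re : ℂ) = h 0 0 := Complex.ext rfl him.symm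
  refine ⟨(h 0 0).re, ha, h 0 1, congrArg pr ?_⟩
  ext i j
  fin_cases i <;> fin_cases j <;>
    simp [tri, hreal, hc, eq_inv_of_mul_eq_one_right hdet]

/-- The parameters of a limit of products `u_t h u_s` with `h → 1` and `|t| → ∞`: the fields `p`,
`q` and `r` stand for the limits of `t * linCoeff h`, `t ^ 2 * quadCoeff h` and `t * Re (h 1 0)`,
and the limit itself is the class of `BlowupLimit.toSL`. -/
structure BlowupLimit where
  p : ℝ
  q : ℝ
  r : ℝ
  nonCancelling_numerator : NonCancelling p q
  nonCancelling_denominator : NonCancelling 1 r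

namespace BlowupLimit

/-- The weighted size of the parameters of a blowup limit. It controls how close the limit is to the
identity and to infinity, because neither entry of its first row involves a cancellation. -/
def size (B : BlowupLimit) : ℝ := weightedSize B.p B.q B.r

lemma one_add_ne_zero (B : BlowupLimit) : 1 + B.r ≠ 0 := fun h =>
  one_ne_zero (B.nonCancelling_denominator.eq_zero_of_add_eq_zero h).1

/-- The matrix `[[1 + r, i (p + q) / (1 + r)], [0, (1 + r)⁻¹]]` of a blowup limit. -/
def toSL (B : BlowupLimit) : SL2C :=
  tri (1 + B.r) B.one_add_ne_zero (((B.p + B.q) / (1 + B.r) : ℝ) * Complex.I)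

lemma toSL_zero_zero (B : BlowupLimit) : B.toSL 0 0 = (1 + B.r : ℝ) := rfl

lemma toSL_zero_one (B : BlowupLimit) :
    B.toSL 0 1 = ((B.p + B.q) / (1 + B.r) : ℝ) * Complex.I := rfl

lemma pr_toSL_mem_AVset (B : BlowupLimit) : pr B.toSL ∈ AVset :=
  pr_tri_mem_AVset B.one_add_ne_zero _

lemma pr_toSL_ne_one {B : BlowupLimit} (h0 : 0 < B.size) (h1 : B.size < 1) :
    pr B.toSL ≠ 1 := by
  intro h
  have hone : B.toSL = 1 ∨ B.toSL = -1 := pr_eq_pr_iff.1 ((map_one pr).trans h.symm)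
  have hsum : B.p + B.q = 0 := by
    have h01 : B.toSL 0 1 = 0 := by rcases hone with h | h <;> simp [h]
    simpa [toSL_zero_one, B.one_add_ne_zero, -Complex.ofReal_div] using h01
  have hr : B.r = 0 := by
    have h00 : ((1 + B.r : ℝ) : ℂ) = 1 ∨ ((1 + B.r : ℝ) : ℂ) = -1 := by
      rw [← toSL_zero_zero]
      refine hone.imp (fun h => ?_) fun h => ?_ <;> simp [h]
    have hr1 := (abs_le_weightedSize B.p B.q B.r).2.2.trans_lt h1
    rcases h00 with h | h <;> norm_cast at h <;> grind
  obtain ⟨hp, hq⟩ := B.nonCancelling_numerator.eq_zero_of_add_eq_zero hsum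
  exact h0.ne' (weightedSize_eq_zero_iff.2 ⟨hp, hq, hr⟩)

lemma tendsto_pr_toSL_one {ι : Type*} {l : Filter ι} {B : ι → BlowupLimit}
    (hB : Tendsto (fun i => (B i).size) l (𝓝 0)) : Tendsto (fun i => pr (B i).toSL) l (𝓝 1) := by
  obtain ⟨hp, hq, hr⟩ := tendsto_zero_of_tendsto_weightedSize hB
  have h1r : Tendsto (fun i => 1 + (B i).r) l (𝓝 1) := by simpa using hr.const_add 1
  have hb : Tendsto (fun i => ((B i).p + (B i).q) / (1 + (B i).r)) l (𝓝 0) := by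
    simpa using! (hp.add hq).div h1r one_ne_zero
  rw [← map_one pr]
  refine (continuous_pr.tendsto 1).comp (tendsto_SL2C_of_tendsto_entries (by simp) ?_ ?_ ?_)
  · exact (Complex.continuous_ofReal.tendsto' 1 _ (by simp)).comp h1r
  · have hcont : Continuous fun x : ℝ => (x : ℂ) * Complex.I := by fun_prop
    exact (hcont.tendsto' 0 _ (by simp)).comp hb
  · exact tendsto_const_nhds

lemma size_le (B : BlowupLimit) : B.size ≤ 2 * (topRowNorm (pr B.toSL) + 1) ^ 2 := by
  obtain ⟨hp, hq⟩ := B.nonCancelling_numerator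
  have hr := B.nonCancelling_denominator.2
  set a := 1 + B.r
  set b := (B.p + B.q) / a
  have hF : topRowNorm (pr B.toSL) = |a| + |b| := by
    rw [topRowNorm_pr, toSL_zero_zero, toSL_zero_one, norm_mul, Complex.norm_I, mul_one,
      Complex.norm_real, Complex.norm_real, Real.norm_eq_abs, Real.norm_eq_abs]
  rw [hF]
  have hpq : |B.p + B.q| = |a| * |b| := by
    rw [← abs_mul, mul_div_cancel₀ _ B.one_add_ne_zero]
  have ha := abs_nonneg a
  have hb := abs_nonneg b
  have hsqrt : √|B.q| ≤ 2 * (|a| + |b|) := by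
    rw [Real.sqrt_le_left (by positivity)]
    nlinarith
  unfold size weightedSize
  nlinarith

lemma tendsto_topRowNorm {ι : Type*} {l : Filter ι} {B : ι → BlowupLimit}
    (hB : Tendsto (fun i => (B i).size) l atTop) :
    Tendsto (fun i => topRowNorm (pr (B i).toSL)) l atTop := by
  have hsqrt := tendsto_atTop_add_const_right l (-1)
    (Real.tendsto_sqrt_atTop.comp (hB.atTop_div_const two_pos))
  refine tendsto_atTop_mono (fun i => ?_) hsqrt
  have hF : 0 ≤ topRowNorm (pr (B i).toSL) := by rw [topRowNorm_pr]; positivity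
  have := Real.sqrt_le_left (x := (B i).size / 2) (y := topRowNorm (pr (B i).toSL) + 1)
    (by positivity)
  simp only [Function.comp_apply]
  linarith [this.2 (by linarith [(B i).size_le])]

end BlowupLimit

/-! ### Passing to the limit -/

/-- The sets `{u_t g_n u_s : t ∈ T_n, s ∈ ℝ}`. -/
abbrev unipotentBlowup (T : ℕ → Set ℝ) (g : ℕ → PSL2C) (n : ℕ) : Set PSL2C :=
  {x | ∃ t ∈ T n, ∃ s : ℝ, x = uu t * g n * uu s}

lemma tendsto_cobounded_of_le_abs_mul {ι : Type*} {l : Filter ι} {f g : ι → ℝ} {η : ℝ}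
    (hη : 0 < η) (hg : Tendsto g l (𝓝 0)) (hfg : ∀ᶠ i in l, η ≤ |f i| * g i) :
    Tendsto f l (Bornology.cobounded ℝ) := by
  have hpos : ∀ᶠ i in l, 0 < g i := hfg.mono fun i hi =>
    pos_of_mul_pos_right (hη.trans_le hi) (abs_nonneg _)
  have hinv : Tendsto (fun i => (g i)⁻¹) l atTop :=
    tendsto_inv_nhdsGT_zero.comp (tendsto_nhdsWithin_iff.2 ⟨hg, hpos⟩)
  refine tendsto_norm_atTop_iff_cobounded.1
    (tendsto_atTop_mono' l ?_ (hinv.const_mul_atTop hη))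
  filter_upwards [hfg, hpos] with i hi hgi
  exact (mul_inv_le_iff₀ hgi).2 hi

lemma exists_blowupLimit {T : ℕ → Set ℝ} {g : ℕ → PSL2C} {h : ℕ → SL2C}
    (hh : Tendsto h atTop (𝓝 1)) (hg : ∀ᶠ n in atTop, pr (h n) = g n) {η M : ℝ} (hη : 0 < η)
    (hfreq : ∃ᶠ n in atTop, ∃ t ∈ T n, |t| * offANSize (h n) ∈ Set.Icc η M ∧
      NonCancelling (linCoeff (h n)) (t * quadCoeff (h n)) ∧
      NonCancelling 1 (t * (h n 1 0).re)) :
    ∃ B : BlowupLimit, B.size ∈ Set.Icc η M ∧ pr B.toSL ∈ seqLimsup (unipotentBlowup T g) := by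
  obtain ⟨U, hU, hUfreq⟩ := exists_ultrafilter_le_of_frequently hfreq
  obtain ⟨t, ht⟩ := hUfreq.choice
  replace hh := hh.mono_left hU
  have hsize (n : ℕ) : |t n| * offANSize (h n) = weightedSize (t n * linCoeff (h n))
      (t n ^ 2 * quadCoeff (h n)) (t n * (h n 1 0).re) := (weightedSize_dilation _ _ _ _).symm
  have hbound (n : ℕ) := hsize n ▸ abs_le_weightedSize (t n * linCoeff (h n))
      (t n ^ 2 * quadCoeff (h n)) (t n * (h n 1 0).re)
  obtain ⟨p, hp⟩ : ∃ p, Tendsto (fun n => t n * linCoeff (h n)) U (𝓝 p) :=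
    exists_tendsto_ultrafilter_of_abs_le U (ht.mono fun n hn => (hbound n).1.trans hn.2.1.2)
  obtain ⟨q, hq⟩ : ∃ q, Tendsto (fun n => t n ^ 2 * quadCoeff (h n)) U (𝓝 q) :=
    exists_tendsto_ultrafilter_of_abs_le U (ht.mono fun n hn => (hbound n).2.1.trans
      (pow_le_pow_left₀ (hη.le.trans hn.2.1.1) hn.2.1.2 2))
  obtain ⟨r, hr⟩ : ∃ r, Tendsto (fun n => t n * (h n 1 0).re) U (𝓝 r) :=
    exists_tendsto_ultrafilter_of_abs_le U (ht.mono fun n hn => (hbound n).2.2.trans hn.2.1.2)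
  let B : BlowupLimit :=
    { p, q, r
      nonCancelling_numerator := .of_tendsto hp hq <| ht.mono fun n hn => by
        simpa only [pow_two, mul_assoc] using hn.2.2.1.mul_left (t n)
      nonCancelling_denominator := .of_tendsto tendsto_const_nhds hr <| ht.mono fun n hn =>
        hn.2.2.2 }
  have hBsize : Tendsto (fun n => |t n| * offANSize (h n)) U (𝓝 B.size) :=
    (tendsto_weightedSize hp hq hr).congr fun n => (hsize n).symm
  have htU : Tendsto t U (Bornology.cobounded ℝ) :=
    tendsto_cobounded_of_le_abs_mul hη ((continuous_offANSize.tendsto' 1 0 offANSize_one).comp hh)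
      (ht.mono fun n hn => hn.2.1.1)
  obtain ⟨s, hs⟩ := exists_tendsto_uMat_mul_mul_uMat hh htU hp hq hr B.one_add_ne_zero
  refine ⟨B, isClosed_Icc.mem_of_tendsto hBsize (ht.mono fun n hn => hn.2.1), ?_⟩
  refine mem_seqLimsup_of_tendsto hU ((continuous_pr.tendsto _).comp hs) ?_
  filter_upwards [ht, hU hg] with n hn hgn
  exact ⟨t n, hn.1, s n, by simp [uu, ← hgn]⟩

lemma eventually_offANSize_pos {g : ℕ → PSL2C} {h : ℕ → SL2C} (hh : Tendsto h atTop (𝓝 1))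
    (hhg : ∀ᶠ n in atTop, pr (h n) = g n) (hg : ∀ n, g n ∉ ANset) :
    ∀ᶠ n in atTop, 0 < offANSize (h n) := by
  have hre (i : Fin 2) : ∀ᶠ n in atTop, 0 < (h n i i).re :=
    ((Complex.continuous_re.tendsto _).comp (tendsto_entry hh i i)).eventually_const_lt (by simp)
  filter_upwards [hhg, hre 0, hre 1] with n hn ha hd
  exact (offANSize_nonneg _).lt_of_ne' fun h0 =>
    hg n (hn ▸ pr_mem_ANset_of_offANSize_eq_zero ha hd h0)

lemma exists_blowupLimit_size_mem_Icc {T : ℕ → Set ℝ} (hT : HasAccumulatingRenormalizations T)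
    {g : ℕ → PSL2C} (hconv : Tendsto g atTop (𝓝 1)) (hg : ∀ n, g n ∉ ANset) {x y : ℕ → ℝ}
    (hx : ∀ k, 0 < x k) (hxy : Tendsto (fun k => y k / x k) atTop atTop) :
    ∃ k, ∃ B : BlowupLimit, B.size ∈ Set.Icc (x k) (y k) ∧
      pr B.toSL ∈ seqLimsup (unipotentBlowup T g) := by
  obtain ⟨h, hhg, hh⟩ := exists_tendsto_lift (x := 1) (by rwa [map_one])
  have hpos := eventually_offANSize_pos hh hhg hg
  have hlam : Tendsto (fun n => (offANSize (h n))⁻¹) atTop atTop :=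
    tendsto_inv_nhdsGT_zero.comp (tendsto_nhdsWithin_iff.2
      ⟨(continuous_offANSize.tendsto' 1 0 offANSize_one).comp hh, hpos⟩)
  obtain ⟨k, hk⟩ := hT.exists_frequently_nonCancelling
    (fun i n => ![linCoeff (h n), 1] i) (fun i n => ![quadCoeff (h n), (h n 1 0).re] i)
    hlam hx hxy
  refine ⟨k, exists_blowupLimit hh hhg (hx k) ((hk.and_eventually hpos).mono ?_)⟩
  rintro n ⟨⟨t, ht, ⟨hlo, hhi⟩, hnc⟩, hn⟩
  exact ⟨t, ht, ⟨(mul_inv_le_iff₀ hn).1 hlo, (le_mul_inv_iff₀ hn).1 hhi⟩, hnc 0, hnc 1⟩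

section Accumulation

variable {T : ℕ → Set ℝ} (hT : HasAccumulatingRenormalizations T) {g : ℕ → PSL2C}
  (hconv : Tendsto g atTop (𝓝 1)) (hg : ∀ n, g n ∉ ANset)
include hT hconv hg

lemma exists_blowupLimit_size_le {δ : ℝ} (hδ : 0 < δ) :
    ∃ B : BlowupLimit, 0 < B.size ∧ B.size ≤ δ ∧ pr B.toSL ∈ seqLimsup (unipotentBlowup T g) := by
  obtain ⟨k, B, hB, hmem⟩ := exists_blowupLimit_size_mem_Icc hT hconv hg
    (x := fun k => (k + 1 : ℝ)⁻¹) (y := fun _ => δ) (fun k => by positivity)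
    (by simpa only [div_inv_eq_mul] using
      (tendsto_atTop_add_const_right _ 1 tendsto_natCast_atTop_atTop).const_mul_atTop hδ)
  exact ⟨B, hB.1.trans_lt' (by positivity), hB.2, hmem⟩

lemma exists_blowupLimit_le_size {R : ℝ} (hR : 0 < R) :
    ∃ B : BlowupLimit, R ≤ B.size ∧ pr B.toSL ∈ seqLimsup (unipotentBlowup T g) := by
  obtain ⟨_, B, hB, hmem⟩ := exists_blowupLimit_size_mem_Icc hT hconv hg
    (x := fun _ => R) (y := fun k => k) (fun _ => hR)
    (tendsto_natCast_atTop_atTop.atTop_div_const hR)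
  exact ⟨B, hB.1, hmem⟩

end Accumulation

/-- Refined unipotent blowup: if `(T_n)` has accumulating renormalizations and
`g_n → e` in `G - AN`, then `AV ∩ limsup_n {u_t g_n u_s : t ∈ T_n, s ∈ ℝ}`
accumulates at `e` and at `∞`. -/
theorem refined_unipotent_blowup_AN
    (T : ℕ → Set ℝ) (hT : HasAccumulatingRenormalizations T)
    (g : ℕ → PSL2C) (hconv : Tendsto g atTop (nhds 1)) (hg : ∀ n, g n ∉ ANset) :
    AccumulatesAtIdAndInfty
      (AVset ∩ seqLimsup (fun n => {x | ∃ t ∈ T n, ∃ s : ℝ, x = uu t * g n * uu s})) := by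
  have hsmall (k : ℕ) := exists_blowupLimit_size_le hT hconv hg (δ := (k + 2 : ℝ)⁻¹) (by positivity)
  have hlarge (k : ℕ) := exists_blowupLimit_le_size hT hconv hg (R := k + 1) (by positivity)
  choose B hB0 hB hBmem using hsmall
  choose C hC hCmem using hlarge
  constructor
  · have hB1 (k) : (B k).size < 1 := (hB k).trans_lt (inv_lt_one_of_one_lt₀ (by norm_cast; omega))
    refine ⟨fun k => pr (B k).toSL, fun k => ⟨⟨(B k).pr_toSL_mem_AVset, hBmem k⟩,
      BlowupLimit.pr_toSL_ne_one (hB0 k) (hB1 k)⟩, BlowupLimit.tendsto_pr_toSL_one ?_⟩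
    refine squeeze_zero (fun k => (hB0 k).le) hB (tendsto_inv_atTop_zero.comp ?_)
    exact tendsto_atTop_add_const_right _ 2 tendsto_natCast_atTop_atTop
  · refine ⟨fun k => pr (C k).toSL, fun k => ⟨(C k).pr_toSL_mem_AVset, hCmem k⟩, fun K hK =>
      eventually_notMem_of_isCompact continuous_topRowNorm (BlowupLimit.tendsto_topRowNorm ?_) hK⟩
    refine tendsto_atTop_mono hC ?_
    exact tendsto_atTop_add_const_right _ 1 tendsto_natCast_atTop_atTop

end
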